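/- arXiv:math/0508172 — 4 statements merged into one kernel-verified Lean document; each statement's English description precedes it below -/
import Mathlib

section
/- Let Z be a Peano continuum which admits no essential map to the circle, and let A, B be disjoint closed subsets of Z. Let c, d ∈ Z \ (A ∪ B). If c and d are not separated by A and not separated by B (i.e., c and d lie in the same component of Z \ A and in the same component of Z \ B), then c and d are not separated by A ∪ B. -/
/-!
Suppose `A ∪ B` separates `c` from `d`. By local connectedness the component `U` of `c` in the
complement of `A ∪ B` is open, and so is the union `V` of the other components. Take a Urysohn
function `φ` with `φ = 0` on `A` and `φ = 1` on `B`, and let `f : Z → S¹` run along the upper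
half circle, `f = exp (iπφ)`, on `U`, and along the lower one, `f = exp (-iπφ)`, elsewhere; the two
formulas agree on `A ∪ B`, so `f` is continuous (`continuousOn_glue`).

As `f` is nullhomotopic, it has a global logarithm `θ` (`exists_lift_of_nullhomotopic`). Off `B`
another continuous logarithm is `πφ` on `U`, `-πφ` elsewhere; off `A` another one is `πφ` on `U`,
`2π - πφ` elsewhere. Two logarithms differ by a constant on a connected set
(`sub_eq_sub_of_exp_eq`), and `c ∈ U`, `d ∉ U` lie in a common connected subset of `Z \ B` and of
`Z \ A`. Comparing the increments of `θ` from `c` to `d` obtained in these two ways gives `2π = 0`.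
-/

open Set Filter Topology Pointwise

/-- The set `E` separates the points `x` and `y`: both lie outside `E` and in
different connected components of the complement of `E`. -/
def SepPts {X : Type*} [TopologicalSpace X] (E : Set X) (x y : X) : Prop :=
  x ∉ E ∧ y ∉ E ∧ connectedComponentIn Eᶜ x ≠ connectedComponentIn Eᶜ y

/-- The set `E` separates the set `Y ⊆ X \ E`: two points of `Y` lie in different
connected components of the complement of `E`. -/
def SepSet {X : Type*} [TopologicalSpace X] (E Y : Set X) : Prop :=
  Y ⊆ Eᶜ ∧ ∃ x ∈ Y, ∃ y ∈ Y, connectedComponentIn Eᶜ x ≠ connectedComponentIn Eᶜ y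

/-- Two (closed) sets `A` and `B` cross: they intersect, or each separates the other. -/
def Crosses {X : Type*} [TopologicalSpace X] (A B : Set X) : Prop :=
  (A ∩ B).Nonempty ∨ (SepSet A B ∧ SepSet B A)

/-- There is a (finite) crossing sequence in `𝓐` from `A` to `B`. -/
def CrossSeqFromTo {X : Type*} [TopologicalSpace X] (𝓐 : Set (Set X)) (A B : Set X) : Prop :=
  ∃ (n : ℕ) (c : ℕ → Set X), c 0 = A ∧ c n = B ∧ (∀ i ≤ n, c i ∈ 𝓐) ∧
    ∀ i < n, Crosses (c i) (c (i + 1))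

/-- A collection `𝓐` is cross-connected: any two of its elements are joined by a
crossing sequence in `𝓐`. -/
def CrossConnected {X : Type*} [TopologicalSpace X] (𝓐 : Set (Set X)) : Prop :=
  ∀ A ∈ 𝓐, ∀ B ∈ 𝓐, CrossSeqFromTo 𝓐 A B

/-- There is a crossing sequence `A, A_1, …, A_n, B` in `𝓐` (with `n ≥ 1`) whose
intermediate terms `A_1, …, A_n` are disjoint from `D`. -/
def CrossSeqAvoiding {X : Type*} [TopologicalSpace X] (𝓐 : Set (Set X)) (A B D : Set X) :
    Prop :=
  ∃ n : ℕ, 1 ≤ n ∧ ∃ c : ℕ → Set X, c 0 = A ∧ c (n + 1) = B ∧ (∀ i ≤ n + 1, c i ∈ 𝓐) ∧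
    (∀ i ≤ n, Crosses (c i) (c (i + 1))) ∧ ∀ i, 1 ≤ i → i ≤ n → c i ∩ D = ∅

/-- A collection of subsets of a metric space is null if for every `ε > 0` only finitely
many of its members have diameter greater than `ε`. -/
def NullFam {X : Type*} [PseudoMetricSpace X] (𝓐 : Set (Set X)) : Prop :=
  ∀ ε : ℝ, 0 < ε → {A ∈ 𝓐 | ε < Metric.diam A}.Finite

/-- A collection `𝓐` is fine if any two distinct points are separated by the union of
some finite subcollection of `𝓐`. -/
def FineFam {X : Type*} [PseudoMetricSpace X] (𝓐 : Set (Set X)) : Prop :=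
  ∀ x y : X, x ≠ y → ∃ 𝓑 ⊆ 𝓐, 𝓑.Finite ∧ SepPts (⋃₀ 𝓑) x y

/-- A sequence of maps `T i : X → X` acts as a convergence sequence on the subset `A`,
with repeller `n ∈ A` and attractor `p ∈ A`: for every compact `C ⊆ A \ {n}` and every
open neighborhood `U` of `p`, eventually `T i '' C ⊆ U`. -/
def ConvSeqOn {X : Type*} [TopologicalSpace X] (A : Set X) (T : ℕ → X → X) (n p : X) :
    Prop :=
  n ∈ A ∧ p ∈ A ∧ ∀ C : Set X, C ⊆ A → IsCompact C → n ∉ C →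
    ∀ U : Set X, IsOpen U → p ∈ U → ∀ᶠ i in atTop, T i '' C ⊆ U

/-- The stabilizer of a subset `A ⊆ X` in `G`. -/
def stab (G : Type*) {X : Type*} [Group G] [MulAction G X] (A : Set X) : Set G :=
  {g : G | g • A = A}

/-- The subset `S` of the group `G` acts as a convergence group on `A ⊆ X`: every
sequence of distinct elements of `S` has a subsequence acting as a convergence
sequence on `A`. -/
def ConvGroupOn {G X : Type*} [Group G] [MulAction G X] [TopologicalSpace X]
    (S : Set G) (A : Set X) : Prop :=
  ∀ g : ℕ → G, (∀ i, g i ∈ S) → Function.Injective g →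
    ∃ k : ℕ → ℕ, StrictMono k ∧ ∃ n p : X,
      ConvSeqOn A (fun i => (g (k i) • · : X → X)) n p

/-- `(G, 𝓐)` is a local convergence pairing on `X`. -/
structure IsLocalConvPairing (G : Type*) {X : Type*} [Group G] [MulAction G X]
    [MetricSpace X] (𝓐 : Set (Set X)) : Prop where
  closed : ∀ A ∈ 𝓐, IsClosed A
  invariant : ∀ g : G, ∀ A ∈ 𝓐, g • A ∈ 𝓐
  big : ∀ A ∈ 𝓐, 2 < A.encard
  null : NullFam 𝓐
  fine : FineFam 𝓐
  stabConv : ∀ A ∈ 𝓐, ConvGroupOn (stab G A) A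
  connect : ∀ A ∈ 𝓐, ∀ B ∈ 𝓐, (A ∩ B).encard ≤ 2 →
    (∀ c : X, A ∩ B = {c} → ∀ b ∈ B, b ≠ c → CrossSeqAvoiding 𝓐 A B {b, c}) ∧
    ((¬ ∃ c : X, A ∩ B = {c}) → CrossSeqAvoiding 𝓐 A B (A ∩ B))

/-- A nullhomotopic map to the circle has a continuous logarithm, by homotopy lifting along the
covering `ℝ → S¹`. -/
lemma exists_lift_of_nullhomotopic {Z : Type*} [TopologicalSpace Z] (f : C(Z, Circle))
    (hf : f.Nullhomotopic) : ∃ θ : C(Z, ℝ), ∀ z, Circle.exp (θ z) = f z := by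
  obtain ⟨y, ⟨H⟩⟩ := hf
  obtain ⟨t, rfl⟩ := Circle.exp_surjective y
  let K := H.symm
  have K0 : ∀ a, K.toContinuousMap (0, a) = Circle.exp (ContinuousMap.const Z t a) :=
    fun a => K.apply_zero a
  let L := Circle.isCoveringMap_exp.liftHomotopy K.toContinuousMap (ContinuousMap.const Z t) K0
  refine ⟨L.comp ((ContinuousMap.const Z 1).prodMk (ContinuousMap.id Z)), fun z => ?_⟩
  have h := congrFun (Circle.isCoveringMap_exp.liftHomotopy_lifts K.toContinuousMap
    (ContinuousMap.const Z t) K0) (1, z)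
  exact h.trans (K.apply_one z)

/-- Two logarithms of the same circle-valued map differ by a constant on a connected set. -/
lemma sub_eq_sub_of_exp_eq {Z : Type*} [TopologicalSpace Z] {S : Set Z} (hS : IsPreconnected S)
    {θ g : Z → ℝ} (hθ : ContinuousOn θ S) (hg : ContinuousOn g S)
    (h : ∀ z ∈ S, Circle.exp (θ z) = Circle.exp (g z)) {x y : Z} (hx : x ∈ S) (hy : y ∈ S) :
    θ x - g x = θ y - g y := by
  have hcount : (Set.range fun n : ℤ => (n : ℝ) * (2 * Real.pi)).Countable :=
    Set.countable_range _
  refine hcount.isTotallyDisconnected _ ?_ (hS.image _ (hθ.sub hg))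
    (Set.mem_image_of_mem _ hx) (Set.mem_image_of_mem _ hy)
  rintro _ ⟨z, hz, rfl⟩
  obtain ⟨m, hm⟩ := Circle.exp_eq_exp.1 (h z hz)
  exact ⟨m, by simp [hm]⟩

open Classical in
/-- Gluing along disjoint open sets `U` and `V`: it suffices that the two maps agree on the part
of `S` outside `U ∪ V`, as this contains the part of the frontier of `U` in `S`. -/
lemma continuousOn_glue {Z Y : Type*} [TopologicalSpace Z] [TopologicalSpace Y] {U V S : Set Z}
    (hU : IsOpen U) (hV : IsOpen V) (hUV : Disjoint U V) {F G : Z → Y}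
    (hF : Continuous F) (hG : Continuous G) (h : ∀ z ∈ S, z ∉ U → z ∉ V → F z = G z) :
    ContinuousOn (fun z => if z ∈ U then F z else G z) S := by
  refine ContinuousOn.if ?_ hF.continuousOn hG.continuousOn
  rintro z ⟨hzS, hz⟩
  rw [Set.ofPred_mem_eq] at hz
  refine h z hzS ?_ ?_
  · exact fun hzU => (hU.frontier_eq ▸ hz).2 hzU
  · exact fun hzV => (hUV.closure_left hV).le_bot ⟨frontier_subset_closure hz, hzV⟩

/-- Janiszewski-type lemma: in a Peano continuum admitting no essential map to the
circle, if disjoint closed sets `A` and `B` each fail to separate `c` from `d`, then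
`A ∪ B` does not separate `c` from `d`. -/
theorem janiszewski {Z : Type*} [MetricSpace Z] [CompactSpace Z] [ConnectedSpace Z]
    [LocallyConnectedSpace Z]
    (hcirc : ∀ f : C(Z, Circle), f.Nullhomotopic)
    (A B : Set Z) (hA : IsClosed A) (hB : IsClosed B) (hAB : Disjoint A B)
    (c d : Z) (hc : c ∉ A ∪ B) (hd : d ∉ A ∪ B)
    (h1 : connectedComponentIn Aᶜ c = connectedComponentIn Aᶜ d)
    (h2 : connectedComponentIn Bᶜ c = connectedComponentIn Bᶜ d) :
    connectedComponentIn (A ∪ B)ᶜ c = connectedComponentIn (A ∪ B)ᶜ d := by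
  classical
  by_contra hne
  set E := (A ∪ B)ᶜ with hE
  have hEo : IsOpen E := (hA.union hB).isOpen_compl
  have hc' : c ∈ E := hc
  have hd' : d ∈ E := hd
  set U := connectedComponentIn E c with hUdef
  have hU : IsOpen U := hEo.connectedComponentIn
  let V : Set Z := ⋃ z ∈ E \ U, connectedComponentIn E z
  have hV : IsOpen V := isOpen_biUnion fun z _ => hEo.connectedComponentIn
  have hUV : Disjoint U V := by
    refine Set.disjoint_iUnion₂_right.2 fun z hz => ?_
    by_contra hmeet
    obtain ⟨w, hwU, hwz⟩ := Set.not_disjoint_iff.1 hmeet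
    refine hz.2 ?_
    rw [hUdef, connectedComponentIn_eq hwU, ← connectedComponentIn_eq hwz]
    exact mem_connectedComponentIn hz.1
  have hcover : ∀ z, z ∉ U → z ∉ V → z ∈ A ∪ B := by
    intro z hzU hzV
    by_contra hz
    exact hzV (Set.mem_biUnion (show z ∈ E \ U from ⟨hz, hzU⟩) (mem_connectedComponentIn hz))
  have hcU : c ∈ U := mem_connectedComponentIn hc'
  have hdU : d ∉ U := fun h => hne (connectedComponentIn_eq h)
  obtain ⟨φ, hφA, hφB, -⟩ := exists_continuous_zero_one_of_isClosed hA hB hAB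
  have hφc : Continuous fun z => Real.pi * φ z := by fun_prop
  have hlow : Continuous fun z => -(Real.pi * φ z) := by fun_prop
  have hhigh : Continuous fun z => 2 * Real.pi - Real.pi * φ z := by fun_prop
  have hexp : ∀ z, Circle.exp (2 * Real.pi - Real.pi * φ z) = Circle.exp (-(Real.pi * φ z)) := by
    intro z
    rw [← Circle.exp_add_two_pi (-(Real.pi * φ z))]
    congr 1
    ring
  have hf : Continuous fun z =>
      if z ∈ U then Circle.exp (Real.pi * φ z) else Circle.exp (-(Real.pi * φ z)) := by
    rw [← continuousOn_univ]
    refine continuousOn_glue hU hV hUV (Circle.exp.continuous.comp hφc)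
      (Circle.exp.continuous.comp hlow) fun z _ hzU hzV => ?_
    rcases hcover z hzU hzV with hz | hz
    · simp [hφA hz]
    · have := hφB hz
      simp only [Pi.one_apply] at this
      rw [← hexp, this]
      congr 1
      ring
  obtain ⟨θ, hθ⟩ := exists_lift_of_nullhomotopic ⟨_, hf⟩ (hcirc _)
  simp only [ContinuousMap.coe_mk] at hθ
  have key1 := sub_eq_sub_of_exp_eq (S := connectedComponentIn Bᶜ c)
    (g := fun z => if z ∈ U then Real.pi * φ z else -(Real.pi * φ z))
    isPreconnected_connectedComponentIn θ.continuous.continuousOn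
    (continuousOn_glue hU hV hUV hφc hlow fun z hzS hzU hzV => by
      have hzB : z ∉ B := connectedComponentIn_subset _ _ hzS
      simp [hφA ((hcover z hzU hzV).resolve_right hzB)])
    (fun z _ => by rw [hθ]; split_ifs <;> rfl)
    (mem_connectedComponentIn fun h => hc (Or.inr h))
    (by rw [h2]; exact mem_connectedComponentIn fun h => hd (Or.inr h))
  have key2 := sub_eq_sub_of_exp_eq (S := connectedComponentIn Aᶜ c)
    (g := fun z => if z ∈ U then Real.pi * φ z else 2 * Real.pi - Real.pi * φ z)
    isPreconnected_connectedComponentIn θ.continuous.continuousOn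
    (continuousOn_glue hU hV hUV hφc hhigh fun z hzS hzU hzV => by
      have hzA : z ∉ A := connectedComponentIn_subset _ _ hzS
      have := hφB ((hcover z hzU hzV).resolve_left hzA)
      simp only [Pi.one_apply] at this
      rw [this]
      ring)
    (fun z _ => by rw [hθ]; split_ifs <;> simp [hexp])
    (mem_connectedComponentIn fun h => hc (Or.inl h))
    (by rw [h1]; exact mem_connectedComponentIn fun h => hd (Or.inl h))
  simp only [hcU, hdU, if_true, if_false] at key1 key2
  linarith [Real.pi_pos]
end

section
/- Let M be a compact connected locally connected Hausdorff space, let c, d ∈ M, and let (A_i) be a nested sequence of closed subsets of M (A_{i+1} ⊆ A_i for all i) with c, d ∉ A_1, such that each A_i separates c from d. Then the intersection ∩_i A_i separates c from d. -/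
/-!
Let `E = ⋂ i, A i` and let `U i` be the component of `c` in `(A i)ᶜ`. The sets `U i` increase and
are open by local connectedness, so `V = ⋃ i, U i` is open. It is also relatively closed in `Eᶜ`:
a point `x ∈ Eᶜ` avoids some `A j`, the component `C` of `x` in `(A j)ᶜ` is open, and if `C` meets
`U k` then `C ⊆ U (max j k)`. Hence the component of `c` in `Eᶜ` is contained in `V`, while `d`
lies in no `U i`.
-/

open Set Filter Topology Pointwise

/-- If each member of a nested sequence of closed sets separates `c` from `d` in a
compact connected locally connected Hausdorff space, then so does the intersection. -/
theorem nested_intersection_separates {M : Type*} [TopologicalSpace M] [CompactSpace M]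
    [ConnectedSpace M] [LocallyConnectedSpace M] [T2Space M]
    (c d : M) (A : ℕ → Set M) (hclosed : ∀ i, IsClosed (A i))
    (hnested : ∀ i, A (i + 1) ⊆ A i) (hc : c ∉ A 0) (hd : d ∉ A 0)
    (hsep : ∀ i, SepPts (A i) c d) :
    SepPts (⋂ i, A i) c d := by
  refine ⟨fun h => hc (mem_iInter.1 h 0), fun h => hd (mem_iInter.1 h 0), fun heq => ?_⟩
  have hdE : d ∈ (⋂ i, A i)ᶜ := fun h => hd (mem_iInter.1 h 0)
  have hcE : c ∈ (⋂ i, A i)ᶜ := fun h => hc (mem_iInter.1 h 0)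
  have hanti : Antitone A := antitone_nat_of_succ_le hnested
  have hopen : ∀ i x, IsOpen (connectedComponentIn (A i)ᶜ x) := fun i x =>
    (hclosed i).isOpen_compl.connectedComponentIn
  have hsub : connectedComponentIn (⋂ i, A i)ᶜ c ⊆ ⋃ i, connectedComponentIn (A i)ᶜ c := by
    refine isPreconnected_connectedComponentIn.subset_of_closure_inter_subset
      (isOpen_iUnion fun i => hopen i c)
      ⟨c, mem_connectedComponentIn hcE, mem_iUnion.2 ⟨0, mem_connectedComponentIn hc⟩⟩ ?_
    rintro x ⟨hxcl, hxK⟩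
    have hxE := connectedComponentIn_subset _ _ hxK
    obtain ⟨j, hj⟩ : ∃ j, x ∉ A j := by simpa using hxE
    -- The component of `x` in `(A j)ᶜ` is a neighbourhood of `x`, so it meets some `U k`;
    -- at stage `max j k` it is therefore swallowed by the component of `c`.
    obtain ⟨y, hyC, hyV⟩ := mem_closure_iff.1 hxcl _ (hopen j x) (mem_connectedComponentIn hj)
    obtain ⟨k, hyk⟩ := mem_iUnion.1 hyV
    have hym := connectedComponentIn_mono c
      (compl_subset_compl.2 (hanti (le_max_right j k))) hyk
    have hCm : connectedComponentIn (A j)ᶜ x ⊆ connectedComponentIn (A (max j k))ᶜ y :=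
      isPreconnected_connectedComponentIn.subset_connectedComponentIn hyC
        ((connectedComponentIn_subset _ _).trans
          (compl_subset_compl.2 (hanti (le_max_left j k))))
    rw [← connectedComponentIn_eq hym] at hCm
    exact mem_iUnion.2 ⟨max j k, hCm (mem_connectedComponentIn hj)⟩
  obtain ⟨i, hi⟩ := mem_iUnion.1 (hsub (heq ▸ mem_connectedComponentIn hdE))
  exact (hsep i).2.2 (connectedComponentIn_eq hi)
end

section
/- Let X be a Peano continuum without cut points which admits no essential map to the circle, and let 𝓐 be a nonempty collection of connected closed subsets of X, each containing at least two points, such that 𝓐 is null and fine. Then the union ∪𝓐 is a connected subset of X. -/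
/-!
The fineness hypothesis forces every connected set disjoint from `S = ⋃₀ 𝓐` to have at most one
point. In particular `S` is dense, because a nonempty open set missing `S` would contain a
one-point component, which would be clopen in the connected space `X`. So if `S` were
disconnected, it would be covered by two *disjoint* open sets `u`, `v` meeting `S` in points `p`,
`q`, and the closed set `(u ∪ v)ᶜ`, which misses `S`, would separate `p` from `q`.

By Zorn's lemma this set contains a minimal closed set `K` separating `p` from `q`
(`exists_minimal_separator`). The circle hypothesis gives Janiszewski's theorem
(`not_both_nonseparating`): two disjoint closed sets, neither of which separates `p` from `q`,
have a union which does not separate them either. Hence the minimal `K` is connected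
(`isPreconnected_of_minimal`). Being disjoint from `S`, it is a single point, which contradicts
the absence of cut points.

Janiszewski's theorem is proved by writing down a circle-valued map which goes once around the
circle along a loop running from `p` to `q` off the first closed set and back off the second one,
and comparing with a real-valued lift of it.
-/

open Set Filter Topology Pointwise

/-- Homotopy lifting along the covering `ℝ → S¹`. -/
lemma exists_real_lift {X : Type*} [TopologicalSpace X] {f : C(X, Circle)}
    (hf : f.Nullhomotopic) : ∃ θ : C(X, ℝ), ∀ x, Circle.exp (θ x) = f x := by
  obtain ⟨y, hy⟩ := hf
  obtain ⟨H⟩ := hy.symm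
  obtain ⟨t, ht⟩ := Circle.exp_surjective y
  have H0 : ∀ a, H.toContinuousMap (0, a) = Circle.exp (ContinuousMap.const X t a) := by
    intro a
    simp [ht]
  let L := Circle.isCoveringMap_exp.liftHomotopy H.toContinuousMap (ContinuousMap.const X t) H0
  refine ⟨⟨fun x => L (1, x), by fun_prop⟩, fun x => ?_⟩
  have := congrFun
    (Circle.isCoveringMap_exp.liftHomotopy_lifts H.toContinuousMap (ContinuousMap.const X t) H0)
    (1, x)
  exact this.trans (H.map_one_left x)

/-- Janiszewski's theorem. The set `U` contains `p` but not `q` and has its frontier in the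
union of the disjoint closed sets `K₁`, `K₂`; then `p` and `q` cannot be joined by connected sets
both in the complement of `K₁` and in the complement of `K₂`. -/
lemma not_both_nonseparating {X : Type*} [TopologicalSpace X] [NormalSpace X]
    (hcirc : ∀ f : C(X, Circle), f.Nullhomotopic)
    {K₁ K₂ U C₁ C₂ : Set X} (hK₁ : IsClosed K₁) (hK₂ : IsClosed K₂) (hd : Disjoint K₁ K₂)
    (hU : frontier U ⊆ K₁ ∪ K₂) {p q : X} (hp : p ∈ U) (hq : q ∉ U)
    (hC₁ : IsPreconnected C₁) (hC₁K : C₁ ⊆ K₁ᶜ) (hp₁ : p ∈ C₁) (hq₁ : q ∈ C₁)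
    (hC₂ : IsPreconnected C₂) (hC₂K : C₂ ⊆ K₂ᶜ) (hp₂ : p ∈ C₂) (hq₂ : q ∈ C₂) : False := by
  classical
  obtain ⟨g, hg₁, hg₂, -⟩ := exists_continuous_zero_one_of_isClosed hK₁ hK₂ hd
  -- `φ` and `ψ` differ by `1` on `U` and by `-1` off `U`, so `π φ` and `π ψ + π` define the same
  -- circle-valued map.
  let φ : X → ℝ := fun x => if x ∈ U then g x else -g x
  let ψ : X → ℝ := fun x => if x ∈ U then g x - 1 else -(g x - 1)
  have hφ : ContinuousOn φ K₂ᶜ := by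
    refine ContinuousOn.if ?_ (by fun_prop) (by fun_prop)
    rintro a ⟨ha, haU⟩
    have : g a = 0 := hg₁ ((hU haU).resolve_right ha)
    simp [this]
  have hψ : ContinuousOn ψ K₁ᶜ := by
    refine ContinuousOn.if ?_ (by fun_prop) (by fun_prop)
    rintro a ⟨ha, haU⟩
    have : g a = 1 := hg₂ ((hU haU).resolve_left ha)
    simp [this]
  have hφψ : ∀ x, Circle.exp (Real.pi * φ x) = Circle.exp (Real.pi * ψ x + Real.pi) := by
    intro x
    by_cases hx : x ∈ U
    · simp only [φ, ψ, hx, if_true]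
      congr 1
      ring
    · simp only [φ, ψ, hx, if_false]
      rw [← Circle.exp_sub_two_pi (Real.pi * -(g x - 1) + Real.pi)]
      congr 1
      ring
  have hf : Continuous fun x => Circle.exp (Real.pi * φ x) := by
    rw [continuous_iff_continuousAt]
    intro x
    by_cases hx : x ∈ K₂
    · have hx₁ : x ∈ K₁ᶜ := fun h => hd.le_bot ⟨h, hx⟩
      have := hψ.continuousAt (hK₁.isOpen_compl.mem_nhds hx₁)
      simp_rw [hφψ]
      exact Circle.exp.continuous.continuousAt.comp
        ((this.const_mul Real.pi).add continuousAt_const)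
    · have := hφ.continuousAt (hK₂.isOpen_compl.mem_nhds hx)
      exact Circle.exp.continuous.continuousAt.comp (this.const_mul Real.pi)
  obtain ⟨θ, hθ⟩ := exists_real_lift (hcirc ⟨_, hf⟩)
  simp only [ContinuousMap.coe_mk] at hθ
  -- `θ - π φ` and `θ - π ψ` have constant image under `Circle.exp`, hence are constant on the
  -- connected sets `C₂` and `C₁` on which they are continuous.
  have e₂ : θ p - Real.pi * φ p = θ q - Real.pi * φ q := by
    refine Circle.isCoveringMap_exp.constOn_of_comp hC₂ (g := fun x => θ x - Real.pi * φ x)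
      (θ.continuous.continuousOn.sub (continuousOn_const.mul (hφ.mono hC₂K))) ?_ hp₂ hq₂
    intro a _ b _
    simp [Circle.exp_sub, hθ]
  have e₁ : θ p - (Real.pi * ψ p + Real.pi) = θ q - (Real.pi * ψ q + Real.pi) := by
    refine Circle.isCoveringMap_exp.constOn_of_comp hC₁
      (g := fun x => θ x - (Real.pi * ψ x + Real.pi))
      (θ.continuous.continuousOn.sub
        ((continuousOn_const.mul (hψ.mono hC₁K)).add continuousOn_const)) ?_ hp₁ hq₁
    intro a _ b _
    rw [Circle.exp_sub, Circle.exp_sub, hθ, hθ, hφψ, hφψ, div_self', div_self']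
  simp only [φ, ψ, hp, hq, if_true, if_false] at e₁ e₂
  linarith [Real.pi_pos]

/-- In a locally connected space the components of an open set have their frontier outside that
set. -/
lemma frontier_connectedComponentIn_subset {X : Type*} [TopologicalSpace X]
    [LocallyConnectedSpace X] {W : Set X} (hW : IsOpen W) (p : X) :
    frontier (connectedComponentIn W p) ⊆ Wᶜ := by
  intro x hx hxW
  rw [hW.connectedComponentIn.frontier_eq] at hx
  obtain ⟨y, hyx, hyp⟩ := mem_closure_iff.1 hx.1 _ hW.connectedComponentIn
    (mem_connectedComponentIn hxW)
  apply hx.2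
  rw [connectedComponentIn_eq hyp, ← connectedComponentIn_eq hyx]
  exact mem_connectedComponentIn hxW

/-- A closed set separating `p` from `q` contains a minimal such set. For a chain of separators
with intersection `L`, the component of `p` in the complement of `L` is the union of the components
of `p` in the complements of the members of the chain. -/
lemma exists_minimal_separator {X : Type*} [TopologicalSpace X] [LocallyConnectedSpace X]
    {K₀ : Set X} {p q : X} (hK₀ : IsClosed K₀) (hp : p ∉ K₀)
    (hsep : q ∉ connectedComponentIn K₀ᶜ p) :
    ∃ K ⊆ K₀, Minimal (fun K => IsClosed K ∧ K ⊆ K₀ ∧ q ∉ connectedComponentIn Kᶜ p) K := by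
  refine zorn_superset_nonempty
    {K | IsClosed K ∧ K ⊆ K₀ ∧ q ∉ connectedComponentIn Kᶜ p} ?_ K₀ ⟨hK₀, subset_rfl, hsep⟩
  intro c hc hchain ⟨L₀, hL₀⟩
  refine ⟨⋂₀ c, ⟨isClosed_sInter fun L hL => (hc hL).1,
    (sInter_subset_of_mem hL₀).trans (hc hL₀).2.1, fun hq => ?_⟩,
    fun L hL => sInter_subset_of_mem hL⟩
  let W : Set X := ⋃ L ∈ c, connectedComponentIn Lᶜ p
  have hWo : IsOpen W := isOpen_biUnion fun L hL => (hc hL).1.isOpen_compl.connectedComponentIn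
  have hpL : ∀ L ∈ c, p ∈ Lᶜ := fun L hL h => hp ((hc hL).2.1 h)
  have hsub : connectedComponentIn (⋂₀ c)ᶜ p ⊆ W := by
    refine isPreconnected_connectedComponentIn.subset_of_closure_inter_subset hWo
      ⟨p, mem_connectedComponentIn fun h => hpL L₀ hL₀ (h L₀ hL₀),
        mem_biUnion hL₀ (mem_connectedComponentIn (hpL L₀ hL₀))⟩ ?_
    rintro x ⟨hxW, hx⟩
    have hx' := connectedComponentIn_subset _ _ hx
    simp only [mem_compl_iff, mem_sInter, not_forall] at hx'
    obtain ⟨L, hL, hxL⟩ := hx'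
    obtain ⟨y, hyx, hyW⟩ := mem_closure_iff.1 hxW _ (hc hL).1.isOpen_compl.connectedComponentIn
      (mem_connectedComponentIn hxL)
    obtain ⟨M, hM, hyM⟩ := mem_iUnion₂.1 hyW
    obtain ⟨N, hN, hNL, hNM⟩ : ∃ N ∈ c, N ⊆ L ∧ N ⊆ M := by
      rcases hchain.total hL hM with h | h
      · exact ⟨L, hL, subset_rfl, h⟩
      · exact ⟨M, hM, h, subset_rfl⟩
    refine mem_biUnion hN ?_
    rw [connectedComponentIn_eq (connectedComponentIn_mono p (compl_subset_compl.2 hNM) hyM),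
      ← connectedComponentIn_eq (connectedComponentIn_mono x (compl_subset_compl.2 hNL) hyx)]
    exact mem_connectedComponentIn fun h => hxL (hNL h)
  obtain ⟨L, hL, hqL⟩ := mem_iUnion₂.1 (hsub hq)
  exact (hc hL).2.2 hqL

lemma isPreconnected_of_minimal {X : Type*} [TopologicalSpace X] [NormalSpace X]
    [LocallyConnectedSpace X] (hcirc : ∀ f : C(X, Circle), f.Nullhomotopic)
    {K K₀ : Set X} {p q : X} (hp : p ∉ K₀)
    (hK : Minimal (fun K => IsClosed K ∧ K ⊆ K₀ ∧ q ∉ connectedComponentIn Kᶜ p) K) :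
    IsPreconnected K := by
  obtain ⟨⟨hKc, hKK, hsep⟩, hmin⟩ := hK
  rw [isPreconnected_iff_subset_of_fully_disjoint_closed hKc]
  intro a b ha hb hab hdisj
  by_contra! hcon
  have hpK : p ∈ Kᶜ := fun h => hp (hKK h)
  -- A closed proper part of `K` does not separate, by minimality.
  have key : ∀ L : Set X, IsClosed L → ¬ K ⊆ L → q ∈ connectedComponentIn (K ∩ L)ᶜ p := by
    intro L hL hKL
    by_contra h
    exact hKL ((hmin ⟨hKc.inter hL, inter_subset_left.trans hKK, h⟩ inter_subset_left).trans
      inter_subset_right)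
  have hmem : ∀ L : Set X, p ∈ connectedComponentIn (K ∩ L)ᶜ p := fun L =>
    mem_connectedComponentIn fun h => hpK h.1
  refine not_both_nonseparating hcirc (hKc.inter ha) (hKc.inter hb)
    (hdisj.mono inter_subset_right inter_subset_right)
    (U := connectedComponentIn Kᶜ p) ?_ (mem_connectedComponentIn hpK) hsep
    isPreconnected_connectedComponentIn (connectedComponentIn_subset _ _) (hmem a)
    (key a ha hcon.1)
    isPreconnected_connectedComponentIn (connectedComponentIn_subset _ _) (hmem b)
    (key b hb hcon.2)
  refine (frontier_connectedComponentIn_subset hKc.isOpen_compl p).trans ?_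
  rw [compl_compl, ← inter_union_distrib_left]
  exact subset_inter subset_rfl hab

lemma FineFam.subsingleton {X : Type*} [PseudoMetricSpace X] {𝓐 : Set (Set X)} (hfine : FineFam 𝓐)
    {C : Set X} (hC : IsPreconnected C) (hd : Disjoint C (⋃₀ 𝓐)) : C.Subsingleton := by
  intro x hx y hy
  by_contra hxy
  obtain ⟨𝓑, h𝓑, -, -, -, hne⟩ := hfine x y hxy
  have hsub : C ⊆ (⋃₀ 𝓑)ᶜ := fun z hz hzB => hd.le_bot ⟨hz, sUnion_mono h𝓑 hzB⟩
  exact hne (connectedComponentIn_eq (hC.subset_connectedComponentIn hx hsub hy))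

/-- The union of a null and fine collection of connected closed subsets (each with at
least two points) of a Peano continuum without cut points admitting no essential map to
the circle is connected. -/
theorem union_is_connected {X : Type*} [MetricSpace X] [CompactSpace X]
    [ConnectedSpace X] [LocallyConnectedSpace X]
    (hcut : ∀ x : X, IsPreconnected ({x}ᶜ : Set X))
    (hcirc : ∀ f : C(X, Circle), f.Nullhomotopic)
    (𝓐 : Set (Set X))
    (hclosed : ∀ A ∈ 𝓐, IsClosed A) (hconn : ∀ A ∈ 𝓐, IsConnected A)
    (hbig : ∀ A ∈ 𝓐, A.Nontrivial)
    (hnull : NullFam 𝓐) (hfine : FineFam 𝓐) (hne : 𝓐.Nonempty) :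
    IsConnected (⋃₀ 𝓐) := by
  obtain ⟨A, hA⟩ := hne
  obtain ⟨a, ha, b, hb, hab⟩ := hbig A hA
  refine ⟨⟨a, A, hA, ha⟩, ?_⟩
  have hdense : Dense (⋃₀ 𝓐) := by
    rw [dense_iff_inter_open]
    rintro W hW ⟨x, hx⟩
    by_contra hempty
    rw [not_nonempty_iff_eq_empty] at hempty
    have hss : (connectedComponentIn W x).Subsingleton :=
      hfine.subsingleton isPreconnected_connectedComponentIn
        ((disjoint_iff_inter_eq_empty.2 hempty).mono_left (connectedComponentIn_subset _ _))
    -- The component of `x` in `W` is open, and closed because it has at most one point.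
    have huniv := IsClopen.eq_univ ⟨hss.isClosed, hW.connectedComponentIn⟩
      ⟨x, mem_connectedComponentIn hx⟩
    rw [huniv] at hss
    exact hab (hss (mem_univ a) (mem_univ b))
  intro u v hu hv huv ⟨p, hpS, hpu⟩ ⟨q, hqS, hqv⟩
  by_contra hempty
  have hdisj : u ∩ v = ∅ := by
    by_contra h
    obtain ⟨z, hz, hzS⟩ := hdense.inter_open_nonempty _ (hu.inter hv) (nonempty_iff_ne_empty.2 h)
    exact hempty ⟨z, hzS, hz⟩
  have hp : p ∉ (u ∪ v)ᶜ := fun h => h (Or.inl hpu)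
  have hsep : q ∉ connectedComponentIn (u ∪ v)ᶜᶜ p := by
    intro hq
    rw [compl_compl] at hq
    obtain ⟨z, -, hz⟩ := isPreconnected_connectedComponentIn u v hu hv
      (connectedComponentIn_subset _ _) ⟨p, mem_connectedComponentIn (Or.inl hpu), hpu⟩
      ⟨q, hq, hqv⟩
    exact hdisj.subset hz
  obtain ⟨K, hKK, hK⟩ := exists_minimal_separator (hu.union hv).isClosed_compl hp hsep
  have hKS : Disjoint K (⋃₀ 𝓐) :=
    disjoint_left.2 fun z hzK hzS => hKK hzK (huv hzS)
  have hKss := hfine.subsingleton (isPreconnected_of_minimal hcirc hp hK) hKS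
  have hcompl : IsPreconnected Kᶜ := by
    rcases hKss.eq_empty_or_singleton with h | ⟨x, h⟩
    · rw [h, compl_empty]
      exact isPreconnected_univ
    · rw [h]
      exact hcut x
  exact hK.prop.2.2 (hcompl.subset_connectedComponentIn (disjoint_right.1 hKS hpS) subset_rfl
    (disjoint_right.1 hKS hqS))
end

section
/- Let X be a Peano continuum without cut points which admits no essential map to the circle, and let 𝓐 be a collection of connected closed subsets of X, each containing at least two points, such that 𝓐 is null and fine. Then 𝓐 is cross-connected: for any A, B ∈ 𝓐 there is a crossing sequence in 𝓐 from A to B. -/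
/-!
Since the members of `𝓐` are connected, a closed set disjoint from a member never separates it, so
two members cross exactly when they meet. Suppose `A` and `B` are not joined by a chain, and let
`𝓒` be the class of `A`, so that every member of `𝓐` outside `𝓒`, in particular `B`, is disjoint
from the connected set `⋃₀ 𝓒`.

The hypothesis on circle maps enters through a Janiszewski-type statement (`SepPts.union`): if the
union of two disjoint closed sets separates `x` from `y`, so does one of them. Indeed, otherwise let
`P` be the component of `x` in the complement of the union, and `u` an Urysohn function for the two
sets. The map equal to `exp (iπu)` on `P` and to `exp (-iπu)` elsewhere is continuous, hence has a
continuous logarithm `iθ`; comparing `θ` with `±πu` along connected sets joining `x` to `y` off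
either of the two sets gives two values of `θ x - θ y` that differ by `2π`.
Together with fineness, it follows that any two points are separated by a finite union of members of
`𝓒` or by a finite union of members of `𝓐 \ 𝓒`.

For finite `F ⊆ 𝓒`, let `W F` be the component of the complement of `⋃₀ F` that contains `B`. For
any two distinct points, one has a neighbourhood missed by the frontier of `W F` for all large `F`:
a separating union of members of `𝓒` confines `W F` to one side, and a separating union of members
outside `𝓒` confines `⋃₀ 𝓒`, which contains the frontier, to one side. So there is a point `p`
such that the frontier of `W F` eventually leaves every compact set that misses `p`. But `p` is not
a cut point, so some continuum missing `p` joins a point of `A` to a point of `B`, and it has to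
meet the frontier of `W F` as soon as `A ∈ F`.
-/

open Set Filter Topology Pointwise

section Helpers

variable {X : Type*}

/-! ### Components and frontiers -/

/-- If `x` and `y` are adherent to a connected set missing `E`, then `E` does not separate them. -/
lemma SepPts.notMem_closure [TopologicalSpace X] {E S : Set X} {x y : X} (h : SepPts E x y)
    (hS : IsPreconnected S) (hSE : S ⊆ Eᶜ) : x ∉ closure S ∨ y ∉ closure S := by
  by_contra! hc
  obtain ⟨hx, hy, hne⟩ := h
  have hT : IsPreconnected (S ∪ {x, y}) :=
    hS.subset_closure subset_union_left
      (union_subset subset_closure (insert_subset hc.1 (singleton_subset_iff.2 hc.2)))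
  have hTE : S ∪ {x, y} ⊆ Eᶜ :=
    union_subset hSE (insert_subset hx (singleton_subset_iff.2 hy))
  exact hne (connectedComponentIn_eq
    (hT.subset_connectedComponentIn (by simp) hTE (by simp : y ∈ S ∪ {x, y})))

lemma frontier_component_subset [TopologicalSpace X] [LocallyConnectedSpace X] {E : Set X}
    (hE : IsClosed E) (b : X) : frontier (connectedComponentIn Eᶜ b) ⊆ E := by
  intro z hz
  by_contra hzE
  have ho : IsOpen (connectedComponentIn Eᶜ b) := hE.isOpen_compl.connectedComponentIn
  rw [ho.frontier_eq] at hz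
  -- The component `V` of `z` is an open neighbourhood of `z`, so it meets the component of `b`.
  have hV : IsOpen (connectedComponentIn Eᶜ z) := hE.isOpen_compl.connectedComponentIn
  have hzV : z ∈ connectedComponentIn Eᶜ z := mem_connectedComponentIn hzE
  obtain ⟨w, hwV, hwb⟩ := mem_closure_iff.1 hz.1 _ hV hzV
  apply hz.2
  rw [connectedComponentIn_eq hwb, ← connectedComponentIn_eq hwV]
  exact hzV

lemma IsPreconnected.inter_frontier_nonempty_of_mem [TopologicalSpace X] {M W : Set X}
    (hM : IsPreconnected M) {a b : X} (ha : a ∈ M) (haW : a ∉ W) (hb : b ∈ M) (hbW : b ∈ W) :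
    (frontier W ∩ M).Nonempty := by
  by_contra hne
  rw [not_nonempty_iff_eq_empty] at hne
  have hf : ∀ z ∈ M, z ∉ frontier W := fun z hz hzf => by
    have : z ∈ frontier W ∩ M := ⟨hzf, hz⟩
    simp [hne] at this
  have hin : ∀ z ∈ M, z ∈ W → z ∈ interior W := fun z hz hzW => by
    by_contra h
    exact hf z hz ⟨subset_closure hzW, h⟩
  have hout : ∀ z ∈ M, z ∉ W → z ∉ closure W := fun z hz hzW h =>
    hf z hz ⟨h, fun h' => hzW (interior_subset h')⟩
  obtain ⟨z, -, hz1, hz2⟩ := hM (interior W) (closure W)ᶜ isOpen_interior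
    isClosed_closure.isOpen_compl
    (fun z hz => (em (z ∈ W)).imp (hin z hz) (hout z hz))
    ⟨b, hb, hin b hb hbW⟩ ⟨a, ha, hout a ha haW⟩
  exact hz2 (subset_closure (interior_subset hz1))

/-- A connected open set in a compact Hausdorff locally connected space is connected by continua. -/
lemma IsPreconnected.exists_continuum [TopologicalSpace X] [CompactSpace X] [T2Space X]
    [LocallyConnectedSpace X] {S : Set X} (hS : IsPreconnected S) (hSo : IsOpen S) {a b : X}
    (ha : a ∈ S) (hb : b ∈ S) :
    ∃ M ⊆ S, IsCompact M ∧ IsPreconnected M ∧ a ∈ M ∧ b ∈ M := by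
  refine hS.induction₂ (fun a b => ∃ M ⊆ S, IsCompact M ∧ IsPreconnected M ∧ a ∈ M ∧ b ∈ M)
    ?_ ?_ ?_ ha hb
  · intro x hx
    obtain ⟨t, ht, htc, htS⟩ := exists_mem_nhds_isClosed_subset (hSo.mem_nhds hx)
    obtain ⟨V, hVt, hVo, hxV, hVc⟩ :=
      locallyConnectedSpace_iff_subsets_isOpen_isConnected.1 ‹_› x t ht
    refine mem_nhdsWithin_of_mem_nhds (mem_of_superset (hVo.mem_nhds hxV) fun y hy => ?_)
    exact ⟨closure V, (closure_minimal hVt htc).trans htS, isClosed_closure.isCompact,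
      hVc.isPreconnected.closure, subset_closure hxV, subset_closure hy⟩
  · rintro x y z - - - ⟨M, hM, hMc, hMp, hx, hy⟩ ⟨N, hN, hNc, hNp, hy', hz⟩
    exact ⟨M ∪ N, union_subset hM hN, hMc.union hNc, hMp.union y hy hy' hNp, .inl hx, .inr hz⟩
  · rintro x y - - ⟨M, hM, hMc, hMp, hx, hy⟩
    exact ⟨M, hM, hMc, hMp, hy, hx⟩

/-! ### Circle maps and separation -/

lemma ContinuousMap.Nullhomotopic.exists_log [TopologicalSpace X] {f : C(X, Circle)}
    (hf : f.Nullhomotopic) : ∃ θ : C(X, ℝ), ∀ x, Circle.exp (θ x) = f x := by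
  obtain ⟨c, ⟨H⟩⟩ := hf
  obtain ⟨t, ht⟩ := Circle.exp_surjective c
  have h0 : ∀ a, H.symm.toContinuousMap (0, a) = Circle.exp ((ContinuousMap.const X t) a) := by
    intro a
    simp [ht]
  let G := Circle.isCoveringMap_exp.liftHomotopy H.symm.toContinuousMap _ h0
  refine ⟨G.comp ⟨fun x => (1, x), by fun_prop⟩, fun x => ?_⟩
  have := congrFun (Circle.isCoveringMap_exp.liftHomotopy_lifts H.symm.toContinuousMap _ h0) (1, x)
  exact this.trans (H.symm.apply_one x)

/-- Two logarithms of the same circle-valued map differ by a constant on a connected set. -/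
lemma sub_const_of_exp_eq [TopologicalSpace X] {M : Set X} (hM : IsPreconnected M) {θ g : X → ℝ}
    (hθ : ContinuousOn θ M) (hg : ContinuousOn g M)
    (h : ∀ z ∈ M, Circle.exp (θ z) = Circle.exp (g z)) {x y : X} (hx : x ∈ M) (hy : y ∈ M) :
    θ x - g x = θ y - g y := by
  have key : ∀ z ∈ M, Circle.exp (θ z - g z) = 1 := fun z hz => by
    rw [Circle.exp_sub, h z hz, div_self']
  exact Circle.isCoveringMap_exp.constOn_of_comp (g := fun z => θ z - g z) hM (hθ.sub hg)
    (fun a ha a' ha' => (key a ha).trans (key a' ha').symm) hx hy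

/-- Janiszewski's theorem for a space without essential maps to the circle: when two disjoint
closed sets together separate two points, one of them already does. -/
lemma SepPts.union [TopologicalSpace X] [NormalSpace X] [LocallyConnectedSpace X]
    (hcirc : ∀ f : C(X, Circle), f.Nullhomotopic) {E₁ E₂ : Set X} (h₁ : IsClosed E₁)
    (h₂ : IsClosed E₂) (hd : Disjoint E₁ E₂) {x y : X} (h : SepPts (E₁ ∪ E₂) x y) :
    SepPts E₁ x y ∨ SepPts E₂ x y := by
  classical
  obtain ⟨hx, hy, hne⟩ := h
  by_contra! hc
  have hx1 : x ∉ E₁ := fun h => hx (.inl h)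
  have hx2 : x ∉ E₂ := fun h => hx (.inr h)
  have hy1 : y ∉ E₁ := fun h => hy (.inl h)
  have hy2 : y ∉ E₂ := fun h => hy (.inr h)
  have hM₁ : connectedComponentIn E₁ᶜ x = connectedComponentIn E₁ᶜ y := by
    by_contra h
    exact hc.1 ⟨hx1, hy1, h⟩
  have hM₂ : connectedComponentIn E₂ᶜ x = connectedComponentIn E₂ᶜ y := by
    by_contra h
    exact hc.2 ⟨hx2, hy2, h⟩
  obtain ⟨u, hu0, hu1, -⟩ := exists_continuous_zero_one_of_isClosed h₁ h₂ hd
  set P := connectedComponentIn (E₁ ∪ E₂)ᶜ x with hP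
  have hxP : x ∈ P := mem_connectedComponentIn hx
  have hyP : y ∉ P := fun h => hne (connectedComponentIn_eq h)
  have hfr : frontier P ⊆ E₁ ∪ E₂ := frontier_component_subset (h₁.union h₂) x
  have h2pi : ∀ t : ℝ, Circle.exp (t + 2 * Real.pi) = Circle.exp t := Circle.periodic_exp
  let f : C(X, Circle) :=
    ⟨fun z => if z ∈ P then Circle.exp (Real.pi * u z) else Circle.exp (-(Real.pi * u z)), by
      refine Continuous.if (fun z hz => ?_) (by fun_prop) (by fun_prop)
      rcases hfr hz with hz | hz
      · simp [hu0 hz]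
      · have := h2pi (-Real.pi)
        rw [show -Real.pi + 2 * Real.pi = Real.pi by ring] at this
        simpa [hu1 hz] using this⟩
  have hfP : ∀ z ∈ P, f z = Circle.exp (Real.pi * u z) := fun z hz => if_pos hz
  have hfQ : ∀ z ∉ P, f z = Circle.exp (-(Real.pi * u z)) := fun z hz => if_neg hz
  obtain ⟨θ, hθ⟩ := (hcirc f).exists_log
  -- Off `E₁`, the two branches `πu` and `2π - πu` of the logarithm fit together along `E₂`.
  have e1 := sub_const_of_exp_eq (M := connectedComponentIn E₁ᶜ x)
    (θ := θ) (g := fun z => if z ∈ P then Real.pi * u z else -(Real.pi * u z) + 2 * Real.pi)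
    isPreconnected_connectedComponentIn θ.continuous.continuousOn
    (ContinuousOn.if (fun z hz => by
        have hz1 : z ∉ E₁ := connectedComponentIn_subset _ _ hz.1
        have hz2 : z ∈ E₂ := (hfr hz.2).resolve_left hz1
        simp only [hu1 hz2, Pi.one_apply]
        ring) (by fun_prop) (by fun_prop))
    (fun z _ => by
      rw [hθ]
      by_cases hz : z ∈ P
      · simp only [hfP z hz, if_pos hz]
      · simp only [hfQ z hz, if_neg hz, h2pi])
    (mem_connectedComponentIn hx1) (y := y) (by rw [hM₁]; exact mem_connectedComponentIn hy1)
  -- Off `E₂`, the branches `πu` and `-πu` fit together along `E₁`.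
  have e2 := sub_const_of_exp_eq (M := connectedComponentIn E₂ᶜ x)
    (θ := θ) (g := fun z => if z ∈ P then Real.pi * u z else -(Real.pi * u z))
    isPreconnected_connectedComponentIn θ.continuous.continuousOn
    (ContinuousOn.if (fun z hz => by
        have hz2 : z ∉ E₂ := connectedComponentIn_subset _ _ hz.1
        have hz1 : z ∈ E₁ := (hfr hz.2).resolve_right hz2
        simp [hu0 hz1]) (by fun_prop) (by fun_prop))
    (fun z _ => by
      rw [hθ]
      by_cases hz : z ∈ P
      · simp only [hfP z hz, if_pos hz]
      · simp only [hfQ z hz, if_neg hz])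
    (mem_connectedComponentIn hx2) (y := y) (by rw [hM₂]; exact mem_connectedComponentIn hy2)
  simp only [if_pos hxP, if_neg hyP] at e1 e2
  linarith [Real.pi_pos]

/-! ### Crossing chains of connected sets -/

lemma Crosses.inter_nonempty [TopologicalSpace X] {A B : Set X} (h : Crosses A B)
    (hB : IsPreconnected B) : (A ∩ B).Nonempty := by
  rcases h with h | ⟨⟨hBA, x, hx, y, hy, hne⟩, -⟩
  · exact h
  · exact (hne (connectedComponentIn_eq (hB.subset_connectedComponentIn hx hBA hy))).elim

lemma CrossSeqFromTo.refl [TopologicalSpace X] {𝓐 : Set (Set X)} {A : Set X} (hA : A ∈ 𝓐) :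
    CrossSeqFromTo 𝓐 A A :=
  ⟨0, fun _ => A, rfl, rfl, fun _ _ => hA, fun _ h => absurd h (Nat.not_lt_zero _)⟩

lemma CrossSeqFromTo.snoc [TopologicalSpace X] {𝓐 : Set (Set X)} {A B C : Set X}
    (h : CrossSeqFromTo 𝓐 A B) (hC : C ∈ 𝓐) (hBC : (B ∩ C).Nonempty) :
    CrossSeqFromTo 𝓐 A C := by
  obtain ⟨n, c, h0, hn, hmem, hcr⟩ := h
  refine ⟨n + 1, fun i => if i ≤ n then c i else C, by simp [h0], by simp, fun i _ => ?_,
    fun i hi => ?_⟩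
  · by_cases h : i ≤ n
    · simpa [h] using hmem i h
    · simpa [h] using hC
  · rcases Nat.lt_succ_iff_lt_or_eq.1 hi with h | rfl
    · simpa [h.le, Nat.succ_le_of_lt h] using hcr i h
    · simpa [hn] using (show Crosses B C from Or.inl hBC)

lemma isPreconnected_sUnion_class [TopologicalSpace X] {𝓐 : Set (Set X)}
    (hconn : ∀ A ∈ 𝓐, IsConnected A) {A : Set X} (hA : A ∈ 𝓐) :
    IsPreconnected (⋃₀ {C ∈ 𝓐 | CrossSeqFromTo 𝓐 A C}) := by
  obtain ⟨a, ha⟩ := (hconn A hA).nonempty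
  refine isPreconnected_of_forall a ?_
  rintro y ⟨C, ⟨-, n, c, h0, rfl, hmem, hcr⟩, hy⟩
  -- Along the chain, each term lies with `a` in a connected subset of the union.
  have key : ∀ i ≤ n, ∃ t ⊆ ⋃₀ {C ∈ 𝓐 | CrossSeqFromTo 𝓐 A C},
      a ∈ t ∧ c i ⊆ t ∧ IsPreconnected t := by
    have hsub : ∀ i ≤ n, c i ⊆ ⋃₀ {C ∈ 𝓐 | CrossSeqFromTo 𝓐 A C} := fun i hi =>
      subset_sUnion_of_mem ⟨hmem i hi, i, c, h0, rfl, fun j hj => hmem j (hj.trans hi),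
        fun j hj => hcr j (hj.trans_le hi)⟩
    intro i
    induction i with
    | zero =>
      intro hi
      exact ⟨c 0, hsub 0 hi, h0 ▸ ha, subset_rfl, (hconn _ (hmem 0 hi)).isPreconnected⟩
    | succ i ih =>
      intro hi
      obtain ⟨t, ht, hat, hct, htc⟩ := ih (by omega)
      have hc' := (hconn _ (hmem (i + 1) hi)).isPreconnected
      obtain ⟨z, hz1, hz2⟩ := (hcr i hi).inter_nonempty hc'
      exact ⟨t ∪ c (i + 1), union_subset ht (hsub _ hi), .inl hat, subset_union_right,
        htc.union z (hct hz1) hz2 hc'⟩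
  obtain ⟨t, ht, hat, hct, htc⟩ := key n le_rfl
  exact ⟨t, ht, hat, hct hy, htc⟩

end Helpers

/-- A null and fine collection of connected closed subsets (each with at least two
points) of a Peano continuum without cut points admitting no essential map to the circle
is cross-connected. -/
theorem family_cross_connected {X : Type*} [MetricSpace X] [CompactSpace X]
    [ConnectedSpace X] [LocallyConnectedSpace X]
    (hcut : ∀ x : X, IsPreconnected ({x}ᶜ : Set X))
    (hcirc : ∀ f : C(X, Circle), f.Nullhomotopic)
    (𝓐 : Set (Set X))
    (hclosed : ∀ A ∈ 𝓐, IsClosed A) (hconn : ∀ A ∈ 𝓐, IsConnected A)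
    (hbig : ∀ A ∈ 𝓐, A.Nontrivial)
    (hnull : NullFam 𝓐) (hfine : FineFam 𝓐) :
    CrossConnected 𝓐 := by
  intro A hA B hB
  by_contra hAB
  set 𝓒 : Set (Set X) := {C ∈ 𝓐 | CrossSeqFromTo 𝓐 A C} with h𝓒
  have h𝓒𝓐 : 𝓒 ⊆ 𝓐 := fun C hC => hC.1
  have hA𝓒 : A ∈ 𝓒 := ⟨hA, .refl hA⟩
  have hdisj : ∀ C ∈ 𝓒, ∀ D ∈ 𝓐, D ∉ 𝓒 → Disjoint C D := by
    intro C hC D hD hDC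
    rw [disjoint_iff_inter_eq_empty, ← not_nonempty_iff_eq_empty]
    exact fun h => hDC ⟨hD, hC.2.snoc hD h⟩
  have hB𝓒 : B ∉ 𝓒 := fun h => hAB h.2
  have hU : IsPreconnected (⋃₀ 𝓒) := isPreconnected_sUnion_class hconn hA
  have hclU : ∀ F ⊆ 𝓐, F.Finite → IsClosed (⋃₀ F) := fun F hF hfin =>
    by
      rw [sUnion_eq_biUnion]
      exact Set.Finite.isClosed_biUnion hfin fun C hC => hclosed C (hF hC)
  obtain ⟨b₀, hb₀⟩ := (hconn B hB).nonempty
  let W : Set (Set X) → Set X := fun F => connectedComponentIn (⋃₀ F)ᶜ b₀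
  have hBF : ∀ F ⊆ 𝓒, B ⊆ (⋃₀ F)ᶜ := by
    rintro F hF z hz ⟨C, hC, hzC⟩
    exact disjoint_left.1 (hdisj C (hF hC) B hB hB𝓒) hzC hz
  have hBW : ∀ F ⊆ 𝓒, B ⊆ W F := fun F hF =>
    (hconn B hB).isPreconnected.subset_connectedComponentIn hb₀ (hBF F hF)
  have hfrW : ∀ F ⊆ 𝓒, F.Finite → frontier (W F) ⊆ ⋃₀ F := fun F hF hfin =>
    frontier_component_subset (hclU F (hF.trans h𝓒𝓐) hfin) b₀
  -- `Missed N`: the frontier of `W F` is disjoint from `N` for all large finite `F ⊆ 𝓒`.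
  let Missed : Set X → Prop := fun N =>
    ∃ F₀ ⊆ 𝓒, F₀.Finite ∧ ∀ F ⊆ 𝓒, F.Finite → F₀ ⊆ F → Disjoint (frontier (W F)) N
  have hconfined : ∀ S x y, (x ∉ closure S ∨ y ∉ closure S) →
      (∃ F₀ ⊆ 𝓒, F₀.Finite ∧ ∀ F ⊆ 𝓒, F.Finite → F₀ ⊆ F → frontier (W F) ⊆ closure S) →
      (∃ N ∈ 𝓝 x, Missed N) ∨ ∃ N ∈ 𝓝 y, Missed N := by
    rintro S x y hxy ⟨F₀, hF₀, hfin, h⟩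
    have hm : Missed (closure S)ᶜ :=
      ⟨F₀, hF₀, hfin, fun F hF hF' hF₀F =>
        disjoint_compl_right_iff_subset.2 (h F hF hF' hF₀F)⟩
    exact hxy.imp (fun h => ⟨_, isClosed_closure.isOpen_compl.mem_nhds h, hm⟩)
      (fun h => ⟨_, isClosed_closure.isOpen_compl.mem_nhds h, hm⟩)
  have hpair : ∀ x y, x ≠ y → (∃ N ∈ 𝓝 x, Missed N) ∨ ∃ N ∈ 𝓝 y, Missed N := by
    intro x y hxy
    obtain ⟨𝓑, h𝓑, hfin, hsep⟩ := hfine x y hxy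
    have hsplit : ⋃₀ 𝓑 = ⋃₀ (𝓑 ∩ 𝓒) ∪ ⋃₀ (𝓑 \ 𝓒) := by
      rw [← sUnion_union, inter_union_sdiff]
    have hd : Disjoint (⋃₀ (𝓑 ∩ 𝓒)) (⋃₀ (𝓑 \ 𝓒)) := by
      rw [disjoint_sUnion_left]
      intro C hC
      rw [disjoint_sUnion_right]
      exact fun D hD => hdisj C hC.2 D (h𝓑 hD.1) hD.2
    rw [hsplit] at hsep
    rcases hsep.union hcirc (hclU _ (inter_subset_left.trans h𝓑) (hfin.subset inter_subset_left))
      (hclU _ (sdiff_subset.trans h𝓑) (hfin.subset sdiff_subset)) hd with hs | hs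
    · refine hconfined (W (𝓑 ∩ 𝓒)) x y
        (hs.notMem_closure isPreconnected_connectedComponentIn (connectedComponentIn_subset _ _))
        ⟨𝓑 ∩ 𝓒, inter_subset_right, hfin.subset inter_subset_left, fun F _ _ hle => ?_⟩
      exact frontier_subset_closure.trans (closure_mono
        (connectedComponentIn_mono _ (compl_subset_compl.2 (sUnion_subset_sUnion hle))))
    · refine hconfined (⋃₀ 𝓒) x y (hs.notMem_closure hU ?_)
        ⟨∅, empty_subset _, finite_empty, fun F hF hF' _ =>
          ((hfrW F hF hF').trans (sUnion_subset_sUnion hF)).trans subset_closure⟩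
      rw [subset_compl_iff_disjoint_right, disjoint_sUnion_left]
      intro C hC
      rw [disjoint_sUnion_right]
      exact fun D hD => hdisj C hC D (h𝓑 hD.1) hD.2
  obtain ⟨p, hp⟩ : ∃ p, ∀ x, x ≠ p → ∃ N ∈ 𝓝 x, Missed N := by
    by_cases h : ∃ p, ¬ ∃ N ∈ 𝓝 p, Missed N
    · obtain ⟨p, hp⟩ := h
      exact ⟨p, fun x hx => (hpair x p hx).resolve_right hp⟩
    · exact ⟨b₀, fun x _ => by_contra fun hx => h ⟨x, hx⟩⟩
  obtain ⟨a, ha, hap⟩ := (hbig A hA).exists_ne p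
  obtain ⟨b, hb, hbp⟩ := (hbig B hB).exists_ne p
  obtain ⟨M, hMp, hMc, hMconn, haM, hbM⟩ :=
    (hcut p).exists_continuum isOpen_compl_singleton hap hbp
  obtain ⟨F₀, hF₀, hfin, hF⟩ : Missed M := by
    refine hMc.induction_on ⟨∅, empty_subset _, finite_empty, fun _ _ _ _ => disjoint_empty _⟩
      ?_ ?_ ?_
    · rintro s t hst ⟨F₀, h, h', hF⟩
      exact ⟨F₀, h, h', fun F h1 h2 h3 => (hF F h1 h2 h3).mono_right hst⟩
    · rintro s t ⟨F₀, h, h', hF⟩ ⟨F₁, k, k', kF⟩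
      exact ⟨F₀ ∪ F₁, union_subset h k, h'.union k', fun F h1 h2 h3 =>
        disjoint_union_right.2 ⟨hF F h1 h2 (subset_union_left.trans h3),
          kF F h1 h2 (subset_union_right.trans h3)⟩⟩
    · intro x hx
      obtain ⟨N, hN, hm⟩ := hp x (hMp hx)
      exact ⟨N, mem_nhdsWithin_of_mem_nhds hN, hm⟩
  have hsub : insert A F₀ ⊆ 𝓒 := insert_subset hA𝓒 hF₀
  have haW : a ∉ W (insert A F₀) := fun h =>
    connectedComponentIn_subset _ _ h ⟨A, mem_insert _ _, ha⟩
  exact not_disjoint_iff_nonempty_inter.2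
    (hMconn.inter_frontier_nonempty_of_mem haM haW hbM (hBW _ hsub hb))
    (hF _ hsub (hfin.insert A) (subset_insert _ _))
end
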